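/- Fix an integer $p \ge 2$ and integers $d_1,\dots,d_p \ge 2$. The number of tuples $(\mathbf{s}_1, \dots, \mathbf{s}_{p-1})$, where for each $i \in \{1,\dots,p-1\}$ the component $\mathbf{s}_i$ is a staging of $\mathcal{X}_{[i]} = \prod_{k=1}^{i}\{0,\dots,d_k-1\}$ in which every stage has at most two context variables, equals $\prod_{i=1}^{p-1}\left(1 - \binom{i}{2} + \sum_{k=1}^{i} i^{d_k}\right)$. (Such a tuple is exactly a CStree on $p$ variables with the fixed variable ordering $1,2,\dots,p$ having stages that use at most two context variables.) -/

import Mathlib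

/-!
Write `X = ∏ k, Fin (d k)` for one level with `n` coordinates. Since every `d k ≥ 2`, a stage
determines its set of context variables, so a staging is the same thing as the function `c` that
sends a point `x` to the set of context variables of the stage containing `x`. The functions that
arise are those with the property `c x = c y` whenever `x` and `y` agree on `c x ∩ c y`
(`IsContextFun`), because two stages are disjoint exactly when they disagree on a common context
variable (`card_stagings_eq_card_contextFun`).

Suppose all `c x` have at most two elements. Distinct values of `c` intersect. If some `c x` is
empty then `c` is constantly `∅`. Otherwise there is a variable `k` lying in every `c x`: failing
that, the intersecting family would contain a triangle `{a, b}`, `{b, e}`, `{a, e}`, and a suitable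
point of `X` could be covered by no stage (`IsContextFun.exists_common`). When `k` is common, `c x`
depends only on `x k`, hence `c x = {k, f (x k)}` for some `f : Fin (d k) → Fin n`, where
`f a = k` encodes a slice that is not subdivided (`IsContextFun.exists_eq_pair`).

The pair `(k, f)` is unique except that `(k, const l)` and `(l, const k)` give the same `c`.
Discarding the `n.choose 2` pairs `(k, const l)` with `l < k` from the `∑ k, n ^ d k` pairs, and
adding the trivial staging, gives the count for one level; the tuples are counted by the product.
-/

open Finset

/-- The stage `𝒮(x_S)` with set of context variables `S` and stage-defining context given by
the coordinates of `x` lying in `S`: the set of points of the level `∀ k : Fin i, Fin (d k)`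
that agree with `x` on the coordinates in `S`. -/
def stage {i : ℕ} (d : Fin i → ℕ) (S : Finset (Fin i)) (x : ∀ k : Fin i, Fin (d k)) :
    Set (∀ k : Fin i, Fin (d k)) :=
  {y | ∀ k ∈ S, y k = x k}

/-- A staging of the level `∀ k : Fin i, Fin (d k)`: a partition of the level into
pairwise disjoint nonempty stages whose union is the whole level. -/
structure IsStaging {i : ℕ} (d : Fin i → ℕ)
    (𝔰 : Set (Set (∀ k : Fin i, Fin (d k)))) : Prop where
  isStage : ∀ s ∈ 𝔰, ∃ S x, s = stage d S x
  nonempty : ∀ s ∈ 𝔰, s.Nonempty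
  pairwiseDisjoint : ∀ s ∈ 𝔰, ∀ t ∈ 𝔰, s ≠ t → Disjoint s t
  covers : ∀ y, ∃ s ∈ 𝔰, y ∈ s

/-- The inclusion of the index set `{1,…,i}` of the `i`-th level into `{1,…,p}`
(here `i` ranges over `Fin (p-1)`, representing level `i+1`). -/
def levelEmb {p : ℕ} (i : Fin (p - 1)) (k : Fin (i.1 + 1)) : Fin p :=
  Fin.castLE (by have := i.isLt; omega) k

section Level

variable {n : ℕ} {d : Fin n → ℕ}

/-- `c` assigns to every point the context variables of its stage in some staging by stages with
at most two context variables. -/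
structure IsContextFun (c : (∀ k : Fin n, Fin (d k)) → Finset (Fin n)) : Prop where
  card_le : ∀ x, (c x).card ≤ 2
  eq_of_agree : ∀ x y, (∀ k ∈ c x, k ∈ c y → x k = y k) → c x = c y

lemma self_mem_stage (S : Finset (Fin n)) (x : ∀ k : Fin n, Fin (d k)) : x ∈ stage d S x :=
  fun _ _ => rfl

lemma stage_eq_of_mem {S : Finset (Fin n)} {x y : ∀ k : Fin n, Fin (d k)}
    (h : y ∈ stage d S x) : stage d S x = stage d S y := by
  ext z
  exact ⟨fun hz k hk => (hz k hk).trans (h k hk).symm, fun hz k hk => (hz k hk).trans (h k hk)⟩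

lemma context_subset_of_stage_subset (hd : ∀ k, 2 ≤ d k) {S T : Finset (Fin n)}
    {x y : ∀ k : Fin n, Fin (d k)} (h : stage d T y ⊆ stage d S x) : S ⊆ T := by
  intro k hk
  by_contra hkT
  have : Nontrivial (Fin (d k)) := Fin.nontrivial_iff_two_le.mpr (hd k)
  obtain ⟨a, ha⟩ := exists_ne (x k)
  have hz : Function.update y k a ∈ stage d T y := by
    intro j hj
    rw [Function.update_of_ne]
    rintro rfl
    exact hkT hj
  have := h hz k hk
  rw [Function.update_self] at this
  exact ha this

lemma context_eq_of_stage_eq (hd : ∀ k, 2 ≤ d k) {S T : Finset (Fin n)}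
    {x y : ∀ k : Fin n, Fin (d k)} (h : stage d S x = stage d T y) : S = T :=
  (context_subset_of_stage_subset hd h.ge).antisymm (context_subset_of_stage_subset hd h.le)

/-- Stages that agree on all common context variables intersect. -/
lemma exists_mem_inter_stage {S T : Finset (Fin n)} {x y : ∀ k : Fin n, Fin (d k)}
    (h : ∀ k ∈ S, k ∈ T → x k = y k) : ∃ z, z ∈ stage d S x ∧ z ∈ stage d T y := by
  refine ⟨fun k => if k ∈ S then x k else y k, fun k hk => by simp [hk], fun k hk => ?_⟩
  by_cases hS : k ∈ S
  · simp [hS, h k hS hk]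
  · simp [hS]

/-- Stagings by stages with at most two context variables correspond bijectively to context
functions. -/
lemma card_stagings_eq_card_contextFun (hd : ∀ k, 2 ≤ d k) :
    Nat.card {𝔰 : Set (Set (∀ k : Fin n, Fin (d k))) //
        IsStaging d 𝔰 ∧ ∀ s ∈ 𝔰, ∃ S x, s = stage d S x ∧ S.card ≤ 2} =
      Nat.card {c : (∀ k : Fin n, Fin (d k)) → Finset (Fin n) // IsContextFun c} := by
  symm
  refine Nat.card_eq_of_bijective
    (fun c => ⟨Set.range fun x => stage d (c.1 x) x, ⟨?_, ?_, ?_, ?_⟩, ?_⟩) ⟨?_, ?_⟩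
  · rintro _ ⟨x, rfl⟩
    exact ⟨_, _, rfl⟩
  · rintro _ ⟨x, rfl⟩
    exact ⟨x, self_mem_stage _ _⟩
  · rintro _ ⟨x, rfl⟩ _ ⟨y, rfl⟩ hne
    rw [Set.disjoint_left]
    intro z hx hy
    apply hne
    have hc : c.1 x = c.1 y :=
      c.2.eq_of_agree x y fun k hk hk' => (hx k hk).symm.trans (hy k hk')
    simp only at hx hy ⊢
    rw [stage_eq_of_mem hx, stage_eq_of_mem hy, hc]
  · exact fun y => ⟨_, ⟨y, rfl⟩, self_mem_stage _ _⟩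
  · rintro _ ⟨x, rfl⟩
    exact ⟨_, _, rfl, c.2.card_le x⟩
  · rintro ⟨c, hc⟩ ⟨c', hc'⟩ h
    have h' : (Set.range fun x => stage d (c x) x) = Set.range fun x => stage d (c' x) x :=
      congrArg Subtype.val h
    refine Subtype.ext (funext fun x => ?_)
    obtain ⟨y, hy⟩ : stage d (c x) x ∈ Set.range fun x => stage d (c' x) x := by
      rw [← h']
      exact ⟨x, rfl⟩
    have hxy : x ∈ stage d (c' y) y := by
      simp only at hy
      rw [hy]
      exact self_mem_stage _ _
    have h1 : c' x = c' y := hc'.eq_of_agree x y fun k _ hk => hxy k hk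
    exact (context_eq_of_stage_eq hd hy.symm).trans h1.symm
  · rintro ⟨𝔰, h𝔰, hcard⟩
    have key : ∀ x, ∃ S : Finset (Fin n), S.card ≤ 2 ∧ stage d S x ∈ 𝔰 := by
      intro x
      obtain ⟨s, hs, hxs⟩ := h𝔰.covers x
      obtain ⟨S, y, rfl, hS⟩ := hcard s hs
      exact ⟨S, hS, stage_eq_of_mem hxs ▸ hs⟩
    choose c hc2 hc using key
    have heq : ∀ s ∈ 𝔰, ∀ t ∈ 𝔰, ∀ z, z ∈ s → z ∈ t → s = t := by
      intro s hs t ht z hzs hzt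
      by_contra hne
      exact Set.disjoint_left.mp (h𝔰.pairwiseDisjoint s hs t ht hne) hzs hzt
    refine ⟨⟨c, hc2, fun x y h => ?_⟩, Subtype.ext ?_⟩
    · obtain ⟨z, hzx, hzy⟩ := exists_mem_inter_stage h
      exact context_eq_of_stage_eq hd (heq _ (hc x) _ (hc y) z hzx hzy)
    · ext s
      constructor
      · rintro ⟨x, rfl⟩
        exact hc x
      · intro hs
        obtain ⟨x, hx⟩ := h𝔰.nonempty s hs
        exact ⟨x, heq _ (hc x) _ hs x (self_mem_stage _ _) hx⟩

/-- A context function that never takes the value `∅` has a variable common to all its values. -/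
lemma IsContextFun.exists_common (hX : Nonempty (∀ k : Fin n, Fin (d k)))
    {c : (∀ k : Fin n, Fin (d k)) → Finset (Fin n)} (hc : IsContextFun c)
    (hne : ∀ x, c x ≠ ∅) : ∃ k, ∀ x, k ∈ c x := by
  by_contra! hno
  have differ : ∀ x y, c x ≠ c y → ∃ k ∈ c x, k ∈ c y ∧ x k ≠ y k := by
    intro x y hxy
    by_contra! h
    exact hxy (hc.eq_of_agree x y h)
  have meet : ∀ x y, ∃ k ∈ c x, k ∈ c y := by
    intro x y
    by_cases h : c x = c y
    · obtain ⟨k, hk⟩ := Finset.nonempty_iff_ne_empty.mpr (hne x)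
      exact ⟨k, hk, h ▸ hk⟩
    · obtain ⟨k, hk, hk', _⟩ := differ x y h
      exact ⟨k, hk, hk'⟩
  have hcard : ∀ x, (c x).card = 2 := by
    intro x
    have h0 := Finset.card_pos.mpr (Finset.nonempty_iff_ne_empty.mpr (hne x))
    have h2 := hc.card_le x
    by_contra h
    obtain ⟨k, hk⟩ := Finset.card_eq_one.mp (show (c x).card = 1 by omega)
    obtain ⟨y, hy⟩ := hno k
    obtain ⟨l, hl, hl'⟩ := meet x y
    rw [hk, Finset.mem_singleton] at hl
    exact hy (hl ▸ hl')
  have pair : ∀ x k l, k ≠ l → k ∈ c x → l ∈ c x → c x = {k, l} := by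
    intro x k l hkl hk hl
    refine (Finset.eq_of_subset_of_card_le ?_ ?_).symm
    · intro j hj
      simp only [Finset.mem_insert, Finset.mem_singleton] at hj
      rcases hj with rfl | rfl <;> assumption
    · rw [hcard, Finset.card_pair hkl]
  obtain ⟨x⟩ := hX
  obtain ⟨a, b, hab, hx⟩ := Finset.card_eq_two.mp (hcard x)
  obtain ⟨y, hy⟩ := hno a
  obtain ⟨z, hz⟩ := hno b
  have hby : b ∈ c y := by
    obtain ⟨k, hk, hk'⟩ := meet x y
    rw [hx] at hk
    grind
  have haz : a ∈ c z := by
    obtain ⟨k, hk, hk'⟩ := meet x z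
    rw [hx] at hk
    grind
  obtain ⟨e, hey, hez⟩ := meet y z
  have hae : a ≠ e := by rintro rfl; exact hy hey
  have hbe : b ≠ e := by rintro rfl; exact hz hez
  have hcy := pair y b e hbe hby hey
  have hcz := pair z a e hae haz hez
  -- The point `w` agrees with `x`, `y`, `z` on `a`, `b`, `e` respectively. Each of the three
  -- stages then forces another variable into `c w`.
  obtain ⟨w, hwa, hwb, hwe⟩ : ∃ w : ∀ k : Fin n, Fin (d k), w a = x a ∧ w b = y b ∧ w e = z e :=
    ⟨fun k => if k = a then x k else if k = b then y k else z k,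
      by simp, by simp [hab.symm], by simp [hae.symm, hbe.symm]⟩
  have h1 : c w = {a, b} ∨ b ∈ c w := by
    by_cases h : c w = c x
    · exact Or.inl (h.trans hx)
    · obtain ⟨k, hk, hk', hne'⟩ := differ w x h
      rw [hx] at hk'
      grind
  have h2 : c w = {b, e} ∨ e ∈ c w := by
    by_cases h : c w = c y
    · exact Or.inl (h.trans hcy)
    · obtain ⟨k, hk, hk', hne'⟩ := differ w y h
      rw [hcy] at hk'
      grind
  have h3 : c w = {a, e} ∨ a ∈ c w := by
    by_cases h : c w = c z
    · exact Or.inl (h.trans hcz)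
    · obtain ⟨k, hk, hk', hne'⟩ := differ w z h
      rw [hcz] at hk'
      grind
  have hb : b ∈ c w := by grind
  have he : e ∈ c w := by grind
  have ha : a ∈ c w := by grind
  rw [pair w b e hbe hb he] at ha
  grind

lemma IsContextFun.exists_eq_pair (hX : Nonempty (∀ k : Fin n, Fin (d k)))
    {c : (∀ k : Fin n, Fin (d k)) → Finset (Fin n)} (hc : IsContextFun c) :
    (∀ x, c x = ∅) ∨
      ∃ (k : Fin n) (f : Fin (d k) → Fin n), ∀ x, c x = {k, f (x k)} := by
  by_cases h0 : ∃ x, c x = ∅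
  · obtain ⟨x, hx⟩ := h0
    refine Or.inl fun y => ?_
    rw [← hx]
    exact (hc.eq_of_agree x y (by simp [hx])).symm
  push Not at h0
  obtain ⟨k, hk⟩ := hc.exists_common hX fun x => (h0 x).ne_empty
  refine Or.inr ⟨k, ?_⟩
  have hex : ∀ x, ∃ e, c x = {k, e} := by
    intro x
    have h2 := hc.card_le x
    have h3 := Finset.card_erase_add_one (hk x)
    have h4 := Finset.insert_erase (hk x)
    rcases Nat.lt_or_ge ((c x).erase k).card 1 with h | h
    · rw [Nat.lt_one_iff, Finset.card_eq_zero] at h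
      rw [h] at h4
      exact ⟨k, by rw [← h4]; simp⟩
    · obtain ⟨e, he⟩ := Finset.card_eq_one.mp (show ((c x).erase k).card = 1 by omega)
      rw [he] at h4
      exact ⟨e, h4.symm⟩
  choose e he using hex
  have hdep : ∀ x y, x k = y k → c x = c y := by
    intro x y hxy
    by_cases h : e x = e y
    · rw [he, he, h]
    · refine hc.eq_of_agree x y fun j hj hj' => ?_
      rw [he] at hj hj'
      grind
  obtain ⟨x₀⟩ := hX
  refine ⟨fun a => e (Function.update x₀ k a), fun x => ?_⟩
  rw [← he]
  exact hdep _ _ (by simp)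

lemma isContextFun_pair (k : Fin n) (f : Fin (d k) → Fin n) :
    IsContextFun (d := d) fun x => {k, f (x k)} := by
  refine ⟨fun x => Finset.card_le_two, fun x y h => ?_⟩
  have : x k = y k := h k (by simp) (by simp)
  simp only [this]

/-- The pairs `(k, f)` encoding the nontrivial context functions `x ↦ {k, f (x k)}`; of the two
encodings `(k, const l)` and `(l, const k)` only the one with the smaller first entry is kept. -/
abbrev ReducedPair (d : Fin n → ℕ) : Type :=
  {u : (k : Fin n) × (Fin (d k) → Fin n) // ¬ ∃ l < u.1, u.2 = fun _ => l}

lemma card_contextFun_eq (hd : ∀ k, 2 ≤ d k) :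
    Nat.card {c : (∀ k : Fin n, Fin (d k)) → Finset (Fin n) // IsContextFun c} =
      Nat.card (Option (ReducedPair d)) := by
  have x₀ : ∀ k : Fin n, Fin (d k) := fun k => ⟨0, by have := hd k; omega⟩
  symm
  refine Nat.card_eq_of_bijective (fun o => o.elim
    ⟨fun _ => ∅, by simp, by simp⟩
    (fun u => ⟨fun x => {u.1.1, u.1.2 (x u.1.1)}, isContextFun_pair _ _⟩)) ⟨?_, ?_⟩
  · rintro (_ | ⟨⟨k, f⟩, hf⟩) (_ | ⟨⟨l, g⟩, hg⟩) h
    · rfl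
    · have := congrFun (congrArg Subtype.val h) x₀
      exact absurd this.symm (Finset.insert_ne_empty _ _)
    · have := congrFun (congrArg Subtype.val h) x₀
      exact absurd this (Finset.insert_ne_empty _ _)
    · have h' : ∀ x : ∀ k : Fin n, Fin (d k), ({k, f (x k)} : Finset (Fin n)) = {l, g (x l)} :=
        fun x => congrFun (congrArg Subtype.val h) x
      by_cases hkl : k = l
      · subst hkl
        have : f = g := by
          funext a
          have := h' (Function.update x₀ k a)
          rw [Function.update_self] at this
          have h1 : f a ∈ ({k, g a} : Finset (Fin n)) := by rw [← this]; simp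
          have h2 : g a ∈ ({k, f a} : Finset (Fin n)) := by rw [this]; simp
          grind
        subst this
        rfl
      · exfalso
        have hfl : f = fun _ => l := by
          funext a
          have := h' (Function.update x₀ k a)
          rw [Function.update_self] at this
          have h1 : l ∈ ({k, f a} : Finset (Fin n)) := by rw [this]; simp
          grind
        have hgk : g = fun _ => k := by
          funext a
          have := h' (Function.update x₀ l a)
          rw [Function.update_self] at this
          have h1 : k ∈ ({l, g a} : Finset (Fin n)) := by rw [← this]; simp
          grind
        rcases lt_or_gt_of_ne hkl with hlt | hlt
        · exact hg ⟨k, hlt, hgk⟩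
        · exact hf ⟨l, hlt, hfl⟩
  · rintro ⟨c, hc⟩
    rcases hc.exists_eq_pair ⟨x₀⟩ with h | ⟨k, f, h⟩
    · exact ⟨none, Subtype.ext (funext fun x => (h x).symm)⟩
    · by_cases hf : ∃ l < k, f = fun _ => l
      · obtain ⟨l, hl, rfl⟩ := hf
        refine ⟨some ⟨⟨l, fun _ => k⟩, ?_⟩, Subtype.ext (funext fun x => ?_)⟩
        · rintro ⟨m, hm, hm'⟩
          have := congrFun hm' (x₀ l)
          simp only at this hm
          subst this
          exact absurd hl hm.not_gt
        · exact (Finset.pair_comm l k).trans (h x).symm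
      · exact ⟨some ⟨⟨k, f⟩, hf⟩, Subtype.ext (funext fun x => (h x).symm)⟩

lemma card_reducedPair (hd : ∀ k, 2 ≤ d k) :
    Nat.card (ReducedPair d) + n.choose 2 = ∑ k : Fin n, n ^ d k := by
  classical
  have hU : Fintype.card ((k : Fin n) × (Fin (d k) → Fin n)) = ∑ k : Fin n, n ^ d k := by
    simp [Fintype.card_sigma]
  have hR : Nat.card ((k : Fin n) × Fin k.1) =
      Nat.card {u : (k : Fin n) × (Fin (d k) → Fin n) // ∃ l < u.1, u.2 = fun _ => l} := by
    refine Nat.card_eq_of_bijective (fun q => ⟨⟨q.1, fun _ => ⟨q.2.1, q.2.2.trans q.1.2⟩⟩,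
      ⟨q.2.1, q.2.2.trans q.1.2⟩, q.2.2, rfl⟩) ⟨?_, ?_⟩
    · rintro ⟨k, l⟩ ⟨k', l'⟩ h
      have h1 := congrArg Subtype.val h
      simp only [Sigma.mk.injEq] at h1
      obtain ⟨rfl, h2⟩ := h1
      have := congrFun (eq_of_heq h2) ⟨0, by have := hd k; omega⟩
      simp only [Fin.mk.injEq] at this
      rw [Fin.ext this]
    · rintro ⟨⟨k, f⟩, l, hl, hf⟩
      simp only at hl hf
      subst hf
      exact ⟨⟨k, l.1, hl⟩, rfl⟩
  have hT : Nat.card ((k : Fin n) × Fin k.1) = n.choose 2 := by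
    rw [Nat.card_eq_fintype_card, Fintype.card_sigma]
    simp only [Fintype.card_fin]
    rw [Fin.sum_univ_eq_sum_range (fun i => i) n, Finset.sum_range_id, Nat.choose_two_right]
  rw [← hU, ← hT, hR, Nat.card_eq_fintype_card, Nat.card_eq_fintype_card,
    Fintype.card_subtype_compl]
  exact Nat.sub_add_cancel (Fintype.card_subtype_le _)

lemma card_stagings (hd : ∀ k, 2 ≤ d k) :
    (Nat.card {𝔰 : Set (Set (∀ k : Fin n, Fin (d k))) //
        IsStaging d 𝔰 ∧ ∀ s ∈ 𝔰, ∃ S x, s = stage d S x ∧ S.card ≤ 2} : ℤ) =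
      1 - ((n.choose 2 : ℕ) : ℤ) + ∑ k : Fin n, (n : ℤ) ^ d k := by
  have h : (Nat.card (ReducedPair d) : ℤ) + (n.choose 2 : ℕ) = ∑ k : Fin n, (n : ℤ) ^ d k := by
    exact_mod_cast card_reducedPair hd
  rw [card_stagings_eq_card_contextFun hd, card_contextFun_eq hd, Finite.card_option, ← h]
  push_cast
  ring

end Level

/-- The number of tuples `(𝔰_1, …, 𝔰_{p-1})`, where `𝔰_i` is a staging of the level
`∏_{k=1}^{i} {0,…,d_k - 1}` in which every stage has at most two context variables
(i.e. of CStrees on `p` variables with the fixed natural variable ordering and stages using at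
most two context variables), equals `∏_{i=1}^{p-1} (1 - C(i,2) + ∑_{k=1}^{i} i^{d_k})`. -/
theorem card_cstrees_fixed_order
    (p : ℕ) (hp : 2 ≤ p) (d : Fin p → ℕ) (hd : ∀ k, 2 ≤ d k) :
    (Nat.card (∀ i : Fin (p - 1),
        {𝔰 : Set (Set (∀ k : Fin (i.1 + 1), Fin (d (levelEmb i k)))) //
          IsStaging (fun k => d (levelEmb i k)) 𝔰 ∧
          ∀ s ∈ 𝔰, ∃ S x, s = stage (fun k => d (levelEmb i k)) S x ∧ S.card ≤ 2}) : ℤ)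
      = ∏ i : Fin (p - 1),
          (1 - (((i.1 + 1).choose 2 : ℕ) : ℤ) +
            ∑ k : Fin (i.1 + 1), ((i.1 + 1 : ℕ) : ℤ) ^ d (levelEmb i k)) := by
  rw [Nat.card_pi, Nat.cast_prod]
  exact Finset.prod_congr rfl fun i _ => card_stagings fun k => hd (levelEmb i k)
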